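/- (1/(4π⁴))·∫₀^π∫₀^π∫₀^π∫₀^π (1 − (1/4)(cos φ₁ + cos φ₂ + cos φ₃ + cos φ₄))^{-1} dφ₁ dφ₂ dφ₃ dφ₄ = (2/π³)·∫₀^∞ 𝒦₊(x)·𝒦₋(x)·(1+x²)^{-1} dx, where for real x ≠ 0, 𝒦₊(x) = (π/2)·Σ_{n=0}^∞ [((1/2)_n / n!)²]·(1+ix)^{−2n} and 𝒦₋(x) = (π/2)·Σ_{n=0}^∞ [((1/2)_n / n!)²]·(1−ix)^{−2n}; since 𝒦₋(x) is the complex conjugate of 𝒦₊(x), the integrand is real and nonnegative. -/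

import Mathlib

open Real MeasureTheory Set

/-- Modified Bessel function `I₀(t) = (1/π)∫₀^π exp(t cos θ) dθ`. -/
noncomputable def I0 (t : ℝ) : ℝ := (1 / π) * ∫ θ in (0:ℝ)..π, exp (t * cos θ)

/-- Modified Bessel function `K₀(t) = ∫₀^∞ exp(−t cosh u) du`. -/
noncomputable def K0 (t : ℝ) : ℝ := ∫ u in Ioi (0:ℝ), exp (-(t * Real.cosh u))

/-- Rising factorial `(a)ₙ = a(a+1)⋯(a+n−1)`. -/
noncomputable def ris (a : ℝ) (n : ℕ) : ℝ := ∏ k ∈ Finset.range n, (a + k)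

/-- Generalized hypergeometric series `ₚF_q(a; b | x)`. -/
noncomputable def pFq (a b : List ℝ) (x : ℝ) : ℝ :=
  ∑' n : ℕ, ((a.map fun p => ris p n).prod / (b.map fun q => ris q n).prod) * x ^ n
    / (n.factorial : ℝ)

/-- `𝒦₊(x) = (π/2)·Σ ((1/2)ₙ/n!)²·(1+ix)^(−2n)`. -/
noncomputable def Kp (x : ℝ) : ℂ :=
  ((π / 2 : ℝ) : ℂ) *
    ∑' n : ℕ, (((ris (1/2) n / (n.factorial : ℝ))^2 : ℝ) : ℂ) *
      (((1 : ℂ) + (x : ℂ) * Complex.I) ^ (2 * n))⁻¹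

/-- `𝒦₋(x) = (π/2)·Σ ((1/2)ₙ/n!)²·(1−ix)^(−2n)`. -/
noncomputable def Km (x : ℝ) : ℂ :=
  ((π / 2 : ℝ) : ℂ) *
    ∑' n : ℕ, (((ris (1/2) n / (n.factorial : ℝ))^2 : ℝ) : ℂ) *
      (((1 : ℂ) - (x : ℂ) * Complex.I) ^ (2 * n))⁻¹

noncomputable def wB (n : ℕ) : ℝ := (n.centralBinom : ℝ) / 4 ^ n

lemma wB_zero : wB 0 = 1 := by simp [wB]

lemma wB_succ (n : ℕ) : wB (n+1) = wB n * ((2*n+1)/(2*n+2)) := by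
  have h := Nat.succ_mul_centralBinom_succ n
  have h' : ((n:ℝ)+1) * ((n+1).centralBinom : ℝ) = 2*(2*n+1) * n.centralBinom := by exact_mod_cast h
  have hn : (n:ℝ)+1 ≠ 0 := by positivity
  have h2 : ((n+1).centralBinom : ℝ) = 2*(2*n+1) * n.centralBinom / (n+1) := by
    field_simp; linarith
  unfold wB
  rw [h2, pow_succ]
  have : (2*(n:ℝ)+2) ≠ 0 := by positivity
  field_simp
  ring

lemma wB_pos (n : ℕ) : 0 < wB n := by
  unfold wB
  have := Nat.centralBinom_pos n
  positivity

lemma ris_eq (n : ℕ) : ris (1/2) n / (n.factorial : ℝ) = wB n := by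
  induction n with
  | zero => simp [ris, wB]
  | succ n ih =>
    rw [wB_succ, ← ih]
    unfold ris
    rw [Finset.prod_range_succ, Nat.factorial_succ]
    push_cast
    have : (n.factorial : ℝ) ≠ 0 := by positivity
    have : (2*(n:ℝ)+2) ≠ 0 := by positivity
    have : ((n:ℝ)+1) ≠ 0 := by positivity
    field_simp
    ring

lemma wB_sq_le (n : ℕ) : wB n ^ 2 ≤ 1 / (2*n+1) := by
  induction n with
  | zero => simp [wB]
  | succ n ih =>
    rw [wB_succ, mul_pow]
    calc wB n ^ 2 * ((2*n+1)/(2*n+2))^2 ≤ 1/(2*n+1) * ((2*n+1)/(2*n+2))^2 := by gcongr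
      _ ≤ _ := by
        push_cast
        have e : 1/(2*(n:ℝ)+1) * ((2*n+1)/(2*n+2))^2 = (2*n+1)/(2*n+2)^2 := by
          field_simp
        rw [e, div_le_div_iff₀ (by positivity) (by positivity)]
        nlinarith

noncomputable def TT (p : ℕ × ℕ) : ℝ :=
  wB p.1 ^ 2 * wB p.2 ^ 2 * (((2*p.1+2*p.2).choose (2*p.1) : ℝ) / 4 ^ (p.1+p.2))

lemma wB_add_le (n m : ℕ) : wB (n+m) ≤ ((n:ℝ)+1)^(-(1/4):ℝ) * ((m:ℝ)+1)^(-(1/4):ℝ) := by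
  have h1 := wB_sq_le (n+m)
  have h0 := (wB_pos (n+m)).le
  refine le_of_pow_le_pow_left₀ (n := 4) (by norm_num) (by positivity) ?_
  have e (x : ℝ) (hx : 0 < x) : (x^(-(1/4):ℝ))^4 = x⁻¹ := by
    rw [← Real.rpow_natCast, ← Real.rpow_mul hx.le]; norm_num
    rw [Real.rpow_neg_one]
  rw [mul_pow, e _ (by positivity), e _ (by positivity)]
  calc wB (n+m) ^ 4 = (wB (n+m)^2)^2 := by ring
    _ ≤ (1 / (2*((n+m:ℕ):ℝ)+1))^2 := by gcongr
    _ ≤ _ := by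
      rw [← mul_inv, div_pow, one_pow, one_div]
      push_cast
      apply inv_anti₀ (by positivity)
      have : (0:ℝ) ≤ n := by positivity
      have : (0:ℝ) ≤ m := by positivity
      nlinarith [mul_nonneg ‹(0:ℝ) ≤ n› ‹(0:ℝ) ≤ m›]

lemma summable_u : Summable (fun n : ℕ => ((n:ℝ)+1)^(-(5/4):ℝ)) := by
  have h := (Real.summable_nat_rpow (p := -(5/4))).2 (by norm_num)
  have := (summable_nat_add_iff 1).2 h
  simpa using this

lemma summable_W : Summable (fun p : ℕ × ℕ => wB p.1 ^ 2 * wB p.2 ^ 2 * wB (p.1+p.2)) := by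
  have hs := summable_u.mul_of_nonneg summable_u (fun n => by positivity) (fun n => by positivity)
  refine Summable.of_nonneg_of_le (fun p => ?_) (fun p => ?_) hs
  · have := wB_pos (p.1+p.2); positivity
  · have key (n : ℕ) : wB n ^2 ≤ ((n:ℝ)+1)^(-1:ℝ) := by
      refine (wB_sq_le n).trans ?_
      rw [Real.rpow_neg_one, one_div]
      apply inv_anti₀ (by positivity)
      have : (0:ℝ) ≤ n := by positivity
      linarith
    have e (n : ℕ) : ((n:ℝ)+1)^(-(5/4):ℝ) = ((n:ℝ)+1)^(-1:ℝ) * ((n:ℝ)+1)^(-(1/4):ℝ) := by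
      rw [← Real.rpow_add (by positivity)]; norm_num
    rw [e, e]
    calc _ ≤ ((p.1:ℝ)+1)^(-1:ℝ) * ((p.2:ℝ)+1)^(-1:ℝ) *
        (((p.1:ℝ)+1)^(-(1/4):ℝ) * ((p.2:ℝ)+1)^(-(1/4):ℝ)) := by
          gcongr
          · exact (wB_pos _).le
          · exact key _
          · exact key _
          · exact wB_add_le _ _
      _ = _ := by ring

lemma TT_nonneg (p) : 0 ≤ TT p := by unfold TT; positivity

lemma summable_TT : Summable TT := by
  refine Summable.of_nonneg_of_le TT_nonneg (fun p => ?_) summable_W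
  unfold TT wB
  gcongr
  rw [← mul_add]
  exact Nat.choose_le_centralBinom _ _

/-! moments -/
lemma cos_even (n : ℕ) : ∫ x in (0:ℝ)..π, cos x ^ (2*n) = π * wB n := by
  induction n with
  | zero => simp [wB]
  | succ n ih =>
    rw [show 2*(n+1) = 2*n+2 by ring, integral_cos_pow, ih, wB_succ]
    simp
    ring

lemma cos_odd (n : ℕ) : ∫ x in (0:ℝ)..π, cos x ^ (2*n+1) = 0 := by
  induction n with
  | zero => simp
  | succ n ih =>
    rw [show 2*(n+1)+1 = (2*n+1)+2 by ring, integral_cos_pow, ih]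
    simp

lemma sum_even (f : ℕ → ℝ) (hf : ∀ i, f (2*i+1) = 0) (n : ℕ) :
    ∑ j ∈ Finset.range (2*n+1), f j = ∑ i ∈ Finset.range (n+1), f (2*i) := by
  induction n with
  | zero => simp
  | succ n ih =>
    rw [show 2*(n+1)+1 = (2*n+1)+1+1 by ring, Finset.sum_range_succ, Finset.sum_range_succ, ih, hf,
      Finset.sum_range_succ _ (n+1)]
    simp [mul_add]

/-- binomial formula for a product -/
lemma moment_prod {α β : Type*} [MeasurableSpace α] [MeasurableSpace β] (μ : Measure α)
    (ν : Measure β) [IsFiniteMeasure μ] [IsFiniteMeasure ν] (X : α → ℝ) (Y : β → ℝ)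
    (hX : ∀ k : ℕ, Integrable (fun a => X a ^ k) μ) (hY : ∀ k : ℕ, Integrable (fun a => Y a ^ k) ν) (k : ℕ) :
    Integrable (fun z : α × β => (X z.1 + Y z.2) ^ k) (μ.prod ν) ∧
    ∫ z, (X z.1 + Y z.2) ^ k ∂(μ.prod ν) =
      ∑ j ∈ Finset.range (k+1), (∫ a, X a ^ j ∂μ) * (∫ b, Y b ^ (k-j) ∂ν) * (k.choose j) := by
  have hI (j : ℕ) : Integrable (fun z : α × β => X z.1 ^ j * Y z.2 ^ (k-j) * (k.choose j : ℝ)) (μ.prod ν) :=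
    ((hX j).mul_prod (hY (k-j))).mul_const _
  simp_rw [add_pow]
  refine ⟨integrable_finsetSum _ (fun j _ => hI j), ?_⟩
  rw [integral_finsetSum _ (fun j _ => hI j)]
  refine Finset.sum_congr rfl fun j _ => ?_
  rw [integral_mul_const, integral_prod_mul (fun a => X a ^ j) (fun b => Y b ^ (k-j))]

lemma moment_odd (f g : ℕ → ℝ) (hf : ∀ i, f (2*i+1) = 0) (hg : ∀ i, g (2*i+1) = 0) (n : ℕ) :
    ∑ j ∈ Finset.range (2*n+1+1), f j * g (2*n+1-j) * ((2*n+1).choose j) = 0 := by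
  refine Finset.sum_eq_zero fun j hj => ?_
  rw [Finset.mem_range] at hj
  obtain ⟨i, hi⟩ | ⟨i, hi⟩ := Nat.even_or_odd j
  · have : 2*n+1-j = 2*(n-i)+1 := by omega
    rw [this, hg]; simp
  · rw [hi, hf]; simp

noncomputable abbrev μ1 : Measure ℝ := volume.restrict (Ioc 0 π)
noncomputable abbrev μ2 : Measure (ℝ × ℝ) := μ1.prod μ1
noncomputable abbrev X2 (z : ℝ × ℝ) : ℝ := cos z.1 + cos z.2

lemma intX1 (k : ℕ) : Integrable (fun a => cos a ^ k) μ1 := by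
  have : IntervalIntegrable (fun a => cos a ^ k) volume 0 π := by
    apply Continuous.intervalIntegrable; fun_prop
  exact (intervalIntegrable_iff_integrableOn_Ioc_of_le pi_pos.le).1 this

lemma m1_even (n : ℕ) : ∫ x, cos x ^ (2*n) ∂μ1 = π * wB n := by
  rw [← cos_even, intervalIntegral.integral_of_le pi_pos.le]

lemma m1_odd (n : ℕ) : ∫ x, cos x ^ (2*n+1) ∂μ1 = 0 := by
  rw [← cos_odd n, intervalIntegral.integral_of_le pi_pos.le]

lemma intX2 (k : ℕ) : Integrable (fun a => X2 a ^ k) μ2 :=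
  (moment_prod μ1 μ1 cos cos intX1 intX1 k).1

lemma m2_odd (n : ℕ) : ∫ x, X2 x ^ (2*n+1) ∂μ2 = 0 := by
  rw [(moment_prod μ1 μ1 cos cos intX1 intX1 (2*n+1)).2]
  exact moment_odd (fun j => ∫ a, cos a ^ j ∂μ1) (fun j => ∫ a, cos a ^ j ∂μ1) m1_odd m1_odd n

lemma choose_two (n i : ℕ) (hi : i ≤ n) : wB i * wB (n-i) * ((2*n).choose (2*i) : ℝ) =
    wB n * (n.choose i : ℝ)^2 := by
  obtain ⟨m, rfl⟩ := Nat.exists_eq_add_of_le hi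
  rw [Nat.add_sub_cancel_left]
  unfold wB
  simp only [Nat.centralBinom]
  rw [Nat.cast_choose ℝ (show i ≤ 2*i by omega), Nat.cast_choose ℝ (show m ≤ 2*m by omega),
    Nat.cast_choose ℝ (show 2*i ≤ 2*(i+m) by omega), Nat.cast_choose ℝ (show i+m ≤ 2*(i+m) by omega),
    Nat.cast_choose ℝ (show i ≤ i+m by omega)]
  rw [show 2*i-i = i by omega, show 2*m-m=m by omega, show 2*(i+m)-2*i = 2*m by omega,
    show 2*(i+m)-(i+m) = i+m by omega, show i+m-i=m by omega]
  have := Nat.factorial_ne_zero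
  have h (k : ℕ) : (k.factorial : ℝ) ≠ 0 := by exact_mod_cast this k
  have h1 := h i
  have h2 := h m
  have h3 := h (2*i)
  have h4 := h (2*m)
  have h5 := h (i+m)
  rw [pow_add]
  field_simp

lemma m2_even (n : ℕ) : ∫ x, X2 x ^ (2*n) ∂μ2 = π^2 * (4^n * wB n ^ 2) := by
  rw [(moment_prod μ1 μ1 cos cos intX1 intX1 (2*n)).2, sum_even _ (fun i => by rw [m1_odd]; simp)]
  have : ∀ i ∈ Finset.range (n+1), (∫ a, cos a ^ (2*i) ∂μ1) * (∫ a, cos a ^ (2*n-2*i) ∂μ1) *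
      ((2*n).choose (2*i) : ℝ) = π^2 * wB n * (n.choose i : ℝ)^2 := by
    intro i hi
    rw [Finset.mem_range] at hi
    rw [← Nat.mul_sub, m1_even, m1_even, mul_assoc (π^2), ← choose_two n i (by omega)]
    ring
  rw [Finset.sum_congr rfl this, ← Finset.mul_sum]
  have := Nat.sum_range_choose_sq n
  have h : (∑ i ∈ Finset.range (n+1), (n.choose i : ℝ)^2) = 4^n * wB n := by
    unfold wB Nat.centralBinom
    rw [← this]; push_cast; field_simp
  rw [h]; ring

noncomputable abbrev μ4 : Measure ((ℝ × ℝ) × (ℝ × ℝ)) := μ2.prod μ2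
noncomputable def SS (z : (ℝ × ℝ) × (ℝ × ℝ)) : ℝ := (1/4) * (X2 z.1 + X2 z.2)

lemma intSS (k : ℕ) : Integrable (fun z => SS z ^ k) μ4 := by
  simp_rw [SS, mul_pow]
  exact ((moment_prod μ2 μ2 X2 X2 intX2 intX2 k).1).const_mul _

lemma m4_odd (n : ℕ) : ∫ x, SS x ^ (2*n+1) ∂μ4 = 0 := by
  simp_rw [SS, mul_pow]
  rw [integral_const_mul, (moment_prod μ2 μ2 X2 X2 intX2 intX2 (2*n+1)).2]
  rw [moment_odd (fun j => ∫ a, X2 a ^ j ∂μ2) (fun j => ∫ a, X2 a ^ j ∂μ2) m2_odd m2_odd n, mul_zero]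

lemma m4_even (n : ℕ) : ∫ x, SS x ^ (2*n) ∂μ4 =
    π^4 * ∑ p ∈ Finset.HasAntidiagonal.antidiagonal n, TT p := by
  simp_rw [SS, mul_pow]
  rw [integral_const_mul, (moment_prod μ2 μ2 X2 X2 intX2 intX2 (2*n)).2,
    sum_even _ (fun i => by rw [m2_odd]; simp),
    Finset.Nat.sum_antidiagonal_eq_sum_range_succ (fun a b => TT (a,b)), Finset.mul_sum, Finset.mul_sum]
  refine Finset.sum_congr rfl fun i hi => ?_
  rw [Finset.mem_range] at hi
  rw [← Nat.mul_sub, m2_even, m2_even]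
  unfold TT
  obtain ⟨m, rfl⟩ := Nat.exists_eq_add_of_le (show i ≤ n by omega)
  simp only [Nat.add_sub_cancel_left]
  rw [← mul_add, pow_mul, pow_add 4 i m, pow_add _ i m]
  have e (k : ℕ) : ((1/4:ℝ)^2)^k = 1/(4^k*4^k) := by
    rw [← mul_pow, one_div (_ ^ k), ← inv_pow]; norm_num
  rw [e, e]
  field_simp

lemma hasSum_anti : HasSum (fun n : ℕ => ∑ p ∈ Finset.HasAntidiagonal.antidiagonal n, TT p) (∑' p, TT p) := by
  have h := summable_TT.hasSum
  rw [← Finset.HasAntidiagonal.sigmaAntidiagonalEquivProd.hasSum_iff] at h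
  refine h.sigma fun n => ?_
  have := hasSum_fintype (fun p : Finset.HasAntidiagonal.antidiagonal n => TT p)
  rw [Finset.sum_coe_sort (Finset.HasAntidiagonal.antidiagonal n) TT] at this
  exact this

lemma SS_bound : ∀ᵐ z ∂μ4, |SS z| < 1 := by
  have h1 : ∀ᵐ x ∂μ1, x ∈ Ioo 0 π := by
    have ha : ∀ᵐ x ∂μ1, x ∈ Ioc 0 π := ae_restrict_mem measurableSet_Ioc
    have hb : ∀ᵐ x ∂μ1, x ≠ π := Measure.ae_ne _ _
    filter_upwards [ha, hb] with x h1 h2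
    exact ⟨h1.1, lt_of_le_of_ne h1.2 h2⟩
  have h2 : ∀ᵐ z ∂μ2, z.1 ∈ Ioo 0 π := Measure.quasiMeasurePreserving_fst.ae h1
  have h4 : ∀ᵐ z ∂μ4, z.1.1 ∈ Ioo 0 π := Measure.quasiMeasurePreserving_fst.ae h2
  filter_upwards [h4] with z hz
  have hs := sin_pos_of_mem_Ioo hz
  have hc : -1 < cos z.1.1 ∧ cos z.1.1 < 1 := by
    have := sin_sq_add_cos_sq z.1.1
    constructor <;> nlinarith [sq_pos_of_pos hs]
  have := neg_one_le_cos z.1.2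
  have := neg_one_le_cos z.2.1
  have := neg_one_le_cos z.2.2
  have := cos_le_one z.1.2
  have := cos_le_one z.2.1
  have := cos_le_one z.2.2
  unfold SS X2
  rw [abs_lt]
  constructor <;> linarith [hc.1, hc.2]

lemma m4_F (n : ℕ) : Integrable (fun z => SS z ^ (2*n) * (1 + SS z)) μ4 ∧
    ∫ z, SS z ^ (2*n) * (1 + SS z) ∂μ4 = π^4 * ∑ p ∈ Finset.HasAntidiagonal.antidiagonal n, TT p := by
  have e : (fun z => SS z ^ (2*n) * (1 + SS z)) = fun z => SS z ^ (2*n) + SS z ^ (2*n+1) := by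
    ext z; ring
  rw [e]
  refine ⟨(intSS _).add (intSS _), ?_⟩
  rw [integral_add (intSS _) (intSS _), m4_odd, m4_even, add_zero]

lemma main4 : ∫ z, 1 / (1 - SS z) ∂μ4 = π^4 * ∑' p, TT p := by
  have hn (n : ℕ) : ∫ z, ‖SS z ^ (2*n) * (1 + SS z)‖ ∂μ4 = π^4 * ∑ p ∈ Finset.HasAntidiagonal.antidiagonal n, TT p := by
    rw [← (m4_F n).2]
    apply integral_congr_ae
    filter_upwards [SS_bound] with z hz
    rw [abs_lt] at hz
    rw [Real.norm_of_nonneg]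
    have : 0 ≤ 1 + SS z := by linarith [hz.1]
    rw [pow_mul]
    positivity
  have hs := hasSum_anti.mul_left (π^4)
  have h := hasSum_integral_of_summable_integral_norm (fun n => (m4_F n).1)
    (by simp_rw [hn]; exact hs.summable)
  simp_rw [(m4_F _).2] at h
  rw [← h.unique hs]
  apply integral_congr_ae
  filter_upwards [SS_bound] with z hz
  have hq : SS z ^ 2 < 1 := (sq_lt_one_iff_abs_lt_one _).2 hz
  rw [abs_lt] at hz
  simp_rw [pow_mul]
  rw [tsum_mul_right, tsum_geometric_of_lt_one (sq_nonneg _) hq]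
  have h1 : 1 - SS z ≠ 0 := by linarith [hz.2]
  have h2 : 1 - SS z ^ 2 ≠ 0 := by linarith
  field_simp
  ring

lemma TT_sum_pos : 0 < ∑' p, TT p := by
  refine summable_TT.tsum_pos TT_nonneg (0,0) ?_
  simp [TT, wB]

lemma int4 : Integrable (fun z => 1 / (1 - SS z)) μ4 := by
  apply Integrable.of_integral_ne_zero
  rw [main4]
  have := TT_sum_pos
  positivity

lemma lhs_eq : (∫ p1 in (0:ℝ)..π, ∫ p2 in (0:ℝ)..π, ∫ p3 in (0:ℝ)..π, ∫ p4 in (0:ℝ)..π,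
        1 / (1 - (1/4) * (cos p1 + cos p2 + cos p3 + cos p4))) = π^4 * ∑' p, TT p := by
  rw [← main4, integral_prod _ int4]
  simp_rw [intervalIntegral.integral_of_le pi_pos.le]
  have hG : (fun z => ∫ w, 1 / (1 - SS (z, w)) ∂μ2) =ᵐ[μ2]
      fun z => ∫ p3, ∫ p4, 1 / (1 - (1/4) * (cos z.1 + cos z.2 + cos p3 + cos p4)) ∂μ1 ∂μ1 := by
    filter_upwards [int4.prod_right_ae] with z hz
    rw [integral_prod _ hz]
    simp only [SS, X2, add_assoc]
  rw [integral_congr_ae hG, integral_prod _ (int4.integral_prod_left.congr hG)]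

/-! the x side -/
noncomputable def gg (p q : ℕ) (x : ℝ) : ℂ :=
  ((1 + (x:ℂ) * Complex.I) ^ p)⁻¹ * ((1 - (x:ℂ) * Complex.I) ^ q)⁻¹

lemma np (x : ℝ) : ‖1 + (x:ℂ) * Complex.I‖ ^ 2 = 1 + x^2 := by
  rw [← Complex.normSq_eq_norm_sq, Complex.normSq_apply]; simp; ring
lemma nm (x : ℝ) : ‖1 - (x:ℂ) * Complex.I‖ ^ 2 = 1 + x^2 := by
  rw [← Complex.normSq_eq_norm_sq, Complex.normSq_apply]; simp; ring
lemma np' (x : ℝ) : ‖1 + (x:ℂ) * Complex.I‖ = √(1 + x^2) := by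
  rw [← np, Real.sqrt_sq (norm_nonneg _)]
lemma nm' (x : ℝ) : ‖1 - (x:ℂ) * Complex.I‖ = √(1 + x^2) := by
  rw [← nm, Real.sqrt_sq (norm_nonneg _)]
lemma zp (x : ℝ) : 1 + (x:ℂ) * Complex.I ≠ 0 := by
  intro h; have := np x; rw [h] at this; simp at this; nlinarith [sq_nonneg x]
lemma zm (x : ℝ) : 1 - (x:ℂ) * Complex.I ≠ 0 := by
  intro h; have := nm x; rw [h] at this; simp at this; nlinarith [sq_nonneg x]

lemma norm_gg (p q : ℕ) (x : ℝ) : ‖gg p q x‖ = (√(1+x^2) ^ (p+q))⁻¹ := by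
  simp only [gg, norm_mul, norm_inv, norm_pow, np', nm']
  rw [pow_add, mul_inv]

lemma cont_gg (p q : ℕ) : Continuous (gg p q) := by
  unfold gg
  refine Continuous.mul (Continuous.inv₀ (by fun_prop) fun x => pow_ne_zero _ (zp x))
    (Continuous.inv₀ (by fun_prop) fun x => pow_ne_zero _ (zm x))

lemma int_gg (p q : ℕ) (h : 2 ≤ p + q) : Integrable (gg p q) := by
  refine integrable_inv_one_add_sq.mono' (cont_gg p q).aestronglyMeasurable (ae_of_all _ fun x => ?_)
  rw [norm_gg]
  apply inv_anti₀ (by positivity)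
  have h1 : 1 ≤ √(1+x^2) := by
    rw [Real.one_le_sqrt]; nlinarith [sq_nonneg x]
  calc 1 + x^2 = √(1+x^2)^2 := (Real.sq_sqrt (by positivity)).symm
    _ ≤ _ := pow_le_pow_right₀ h1 h

lemma J_zero_right (a : ℕ) : ∫ x, gg (a+2) 0 x = 0 := by
  have hd (x : ℝ) : HasDerivAt (fun x => (Complex.I / (a+1)) * gg (a+1) 0 x) (gg (a+2) 0 x) x := by
    have h1 : HasDerivAt (fun x : ℝ => 1 + (x:ℂ) * Complex.I) Complex.I x := by
      simpa using ((Complex.ofRealCLM.hasDerivAt (x := x)).mul_const Complex.I).const_add 1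
    have h2 := ((h1.pow (a+1)).inv (pow_ne_zero _ (zp x))).const_mul (Complex.I / (a+1))
    have hz := zp x
    have ha : (a:ℂ) + 1 ≠ 0 := by exact_mod_cast Nat.succ_ne_zero a
    have e1 : (fun y => (Complex.I / (a+1)) * gg (a+1) 0 y) = fun y : ℝ => Complex.I / (a+1) *
        ((fun x : ℝ => 1 + (x:ℂ) * Complex.I) ^ (a + 1))⁻¹ y := by
      ext y
      simp only [gg, pow_zero, inv_one, mul_one, Pi.inv_apply, Pi.pow_apply]
    rw [e1]
    refine h2.congr_deriv ?_
    simp only [gg, pow_zero, inv_one, mul_one, Nat.add_sub_cancel, Pi.pow_apply]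
    push_cast
    have hz' : (1 + (x:ℂ) * Complex.I) ^ a ≠ 0 := pow_ne_zero _ hz
    generalize 1 + (x:ℂ) * Complex.I = z at *
    rw [pow_add z a 2, pow_add z a 1]
    generalize z ^ a = t at *
    field_simp
    rw [Complex.I_sq]; ring
  have hn (l : Filter ℝ) (hl : Filter.Tendsto (fun x : ℝ => |x|) l Filter.atTop) :
      Filter.Tendsto (fun x => (Complex.I / (a+1)) * gg (a+1) 0 x) l (nhds 0) := by
    rw [← mul_zero (Complex.I / (a+1))]
    apply Filter.Tendsto.const_mul
    rw [tendsto_zero_iff_norm_tendsto_zero]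
    refine squeeze_zero' (Filter.Eventually.of_forall fun _ => norm_nonneg _) ?_ (tendsto_inv_atTop_zero.comp hl)
    filter_upwards [hl.eventually_gt_atTop 0] with x hx
    rw [norm_gg]
    simp only [Function.comp, add_zero]
    apply inv_anti₀ hx
    have h1 : 1 ≤ √(1+x^2) := by
      rw [Real.one_le_sqrt]; nlinarith [sq_nonneg x]
    calc |x| ≤ √(1+x^2) := Real.abs_le_sqrt (by linarith)
      _ ≤ _ := le_self_pow₀ h1 (by omega)
  have := integral_of_hasDerivAt_of_tendsto hd (int_gg _ _ (by omega))
    (hn _ Filter.tendsto_abs_atBot_atTop) (hn _ Filter.tendsto_abs_atTop_atTop)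
  simpa using this

lemma gg_neg (p q : ℕ) (x : ℝ) : gg p q (-x) = gg q p x := by
  simp [gg]; ring

lemma J_zero_left (a : ℕ) : ∫ x, gg 0 (a+2) x = 0 := by
  rw [← J_zero_right a, ← integral_neg_eq_self (gg (a+2) 0)]
  simp_rw [gg_neg]

lemma gg_rec (p q : ℕ) (x : ℝ) : gg (p+1) (q+1) x = (1/2) * (gg (p+1) q x + gg p (q+1) x) := by
  unfold gg
  have := zp x
  have := zm x
  field_simp
  ring

lemma J_rec (p q : ℕ) (h : 1 ≤ p + q) : ∫ x, gg (p+1) (q+1) x =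
    (1/2) * ((∫ x, gg (p+1) q x) + ∫ x, gg p (q+1) x) := by
  simp_rw [gg_rec p q]
  rw [integral_const_mul, integral_add (int_gg _ _ (by omega)) (int_gg _ _ (by omega))]

lemma J_eq (N : ℕ) : ∀ a b : ℕ, a + b = N →
    ∫ x, gg (a+1) (b+1) x = ((π * ((a+b).choose a / 2^(a+b)) : ℝ) : ℂ) := by
  induction N with
  | zero =>
    intro a b h
    obtain ⟨rfl, rfl⟩ : a = 0 ∧ b = 0 := by omega
    have : (fun x => gg (0+1) (0+1) x) = fun x : ℝ => (((1+x^2)⁻¹ : ℝ) : ℂ) := by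
      ext x
      simp only [gg, zero_add, pow_one]
      rw [← mul_inv]
      push_cast
      congr 1
      ring_nf
      rw [Complex.I_sq]; ring
    rw [this, integral_complex_ofReal, integral_univ_inv_one_add_sq]
    simp
  | succ N ih =>
    intro a b h
    rw [J_rec a b (by omega)]
    rcases a with _ | a
    · obtain rfl : b = N + 1 := by omega
      rw [J_zero_left, ih 0 N (by omega)]
      push_cast
      simp [pow_succ]
      ring
    · rcases b with _ | b
      · rw [J_zero_right, ih a 0 (by omega)]
        simp [pow_succ]
        ring
      · rw [ih (a+1) b (by omega), ih a (b+1) (by omega)]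
        have := Nat.choose_succ_succ (a+b+1) a
        rw [show a + 1 + (b+1) = a+b+1+1 by ring, show a+1+b = a+b+1 by ring,
          show a+(b+1) = a+b+1 by ring, this, pow_succ _ (a+b+1)]
        push_cast
        field_simp
        ring

lemma J_TT (p : ℕ × ℕ) : ∫ x, ((wB p.1 ^ 2 * wB p.2 ^ 2 : ℝ) : ℂ) * gg (2*p.1+1) (2*p.2+1) x =
    ((π * TT p : ℝ) : ℂ) := by
  rw [integral_const_mul, J_eq _ _ _ rfl, ← Complex.ofReal_mul]
  unfold TT
  rw [← mul_add, pow_mul]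
  norm_num
  ring

lemma J_norm (p : ℕ × ℕ) : ∫ x, ‖((wB p.1 ^ 2 * wB p.2 ^ 2 : ℝ) : ℂ) * gg (2*p.1+1) (2*p.2+1) x‖ =
    π * (wB p.1 ^ 2 * wB p.2 ^ 2 * wB (p.1 + p.2)) := by
  simp_rw [norm_mul, Complex.norm_of_nonneg (show 0 ≤ wB p.1 ^ 2 * wB p.2 ^ 2 by positivity)]
  rw [integral_const_mul]
  have h := J_eq _ (p.1+p.2) (p.1+p.2) rfl
  have e (x : ℝ) : gg (p.1+p.2+1) (p.1+p.2+1) x = ((‖gg (2*p.1+1) (2*p.2+1) x‖ : ℝ) : ℂ) := by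
    rw [norm_gg, show 2*p.1+1+(2*p.2+1) = 2*(p.1+p.2+1) by ring, pow_mul, Real.sq_sqrt (by positivity)]
    unfold gg
    rw [← mul_inv, ← mul_pow]
    push_cast
    congr 2
    ring_nf
    rw [Complex.I_sq]; ring
  simp_rw [e] at h
  rw [integral_complex_ofReal] at h
  rw [Complex.ofReal_injective h, show wB (p.1+p.2) = _ from rfl, wB.eq_def (p.1+p.2), Nat.centralBinom, ← two_mul, pow_mul]
  norm_num
  ring

lemma hasSum_J : HasSum (fun p : ℕ × ℕ => ((π * TT p : ℝ) : ℂ))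
    (∫ x, ∑' p : ℕ × ℕ, ((wB p.1 ^ 2 * wB p.2 ^ 2 : ℝ) : ℂ) * gg (2*p.1+1) (2*p.2+1) x) := by
  simp_rw [← J_TT]
  apply hasSum_integral_of_summable_integral_norm
  · intro p
    exact (int_gg _ _ (by omega)).const_mul _
  · simp_rw [J_norm]
    exact summable_W.mul_left _

lemma J_total : ∫ x, ∑' p : ℕ × ℕ, ((wB p.1 ^ 2 * wB p.2 ^ 2 : ℝ) : ℂ) * gg (2*p.1+1) (2*p.2+1) x
    = ((π * ∑' p, TT p : ℝ) : ℂ) := by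
  refine hasSum_J.unique ?_
  exact Complex.hasSum_ofReal.2 (summable_TT.hasSum.mul_left π)

lemma norm_bd (x : ℝ) (hx : x ≠ 0) (z : ℂ) (hz : ‖z‖^2 = 1 + x^2) :
    Summable (fun n : ℕ => ‖((wB n ^ 2 : ℝ) : ℂ) * (z ^ (2*n))⁻¹‖) := by
  have hr : (1+x^2)⁻¹ < 1 := inv_lt_one_of_one_lt₀ (by have := sq_pos_of_ne_zero hx; linarith)
  refine Summable.of_nonneg_of_le (fun _ => norm_nonneg _) (fun n => ?_)
    (summable_geometric_of_lt_one (by positivity) hr)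
  rw [norm_mul, norm_inv, norm_pow, pow_mul, hz, Complex.norm_of_nonneg (by positivity), inv_pow]
  have h1 : wB n ^ 2 ≤ 1 := (wB_sq_le n).trans (by
    rw [div_le_one (by positivity)]; linarith [(Nat.cast_nonneg n : (0:ℝ) ≤ n)])
  exact mul_le_of_le_one_left (by positivity) h1

lemma KK (x : ℝ) (hx : x ≠ 0) : Kp x * Km x * (((1 + x^2)⁻¹ : ℝ) : ℂ) = ((π^2/4 : ℝ) : ℂ) *
    ∑' p : ℕ × ℕ, ((wB p.1 ^ 2 * wB p.2 ^ 2 : ℝ) : ℂ) * gg (2*p.1+1) (2*p.2+1) x := by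
  unfold Kp Km
  simp_rw [ris_eq]
  have h := tsum_mul_tsum_of_summable_norm (norm_bd x hx _ (np x)) (norm_bd x hx _ (nm x))
  have e1 : (((1 + x^2)⁻¹ : ℝ) : ℂ) = gg 1 1 x := by
    simp only [gg, pow_one]
    rw [← mul_inv]
    push_cast
    congr 1
    ring_nf
    rw [Complex.I_sq]; ring
  rw [mul_mul_mul_comm, h, mul_assoc, ← tsum_mul_right, e1]
  congr 1
  · push_cast; ring
  · refine tsum_congr fun p => ?_
    unfold gg
    push_cast
    have := zp x
    have := zm x
    field_simp
    ring

lemma Kp_neg (x : ℝ) : Kp (-x) = Km x := by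
  unfold Kp Km; simp [sub_eq_add_neg]
lemma Km_neg (x : ℝ) : Km (-x) = Kp x := by
  unfold Kp Km; simp [sub_eq_add_neg]

lemma rhs_eq : 2 * ∫ x in Ioi (0:ℝ), (Kp x * Km x).re / (1 + x^2) = π^2/4 * (π * ∑' p, TT p) := by
  rw [← integral_comp_abs (f := fun x => (Kp x * Km x).re / (1 + x^2))]
  have habs (x : ℝ) : (Kp |x| * Km |x|).re / (1 + |x|^2) = (Kp x * Km x * (((1 + x^2)⁻¹ : ℝ) : ℂ)).re := by
    rw [Complex.re_mul_ofReal, sq_abs, div_eq_mul_inv]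
    rcases abs_choice x with h | h <;> rw [h]
    rw [Kp_neg, Km_neg, mul_comm (Km x)]
  simp_rw [habs]
  have hI := J_total
  set Φ : ℝ → ℂ := fun x => ∑' p : ℕ × ℕ, ((wB p.1 ^ 2 * wB p.2 ^ 2 : ℝ) : ℂ) * gg (2*p.1+1) (2*p.2+1) x with hΦ
  have hint : Integrable Φ := by
    apply Integrable.of_integral_ne_zero
    rw [hI]
    have := TT_sum_pos
    exact_mod_cast (by positivity : π * ∑' p, TT p ≠ 0)
  have : (fun x => (Kp x * Km x * (((1 + x^2)⁻¹ : ℝ) : ℂ)).re) =ᵐ[volume] fun x => π^2/4 * RCLike.re (Φ x) := by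
    filter_upwards [Measure.ae_ne volume (0:ℝ)] with x hx
    rw [KK x hx, Complex.re_ofReal_mul]
    rfl
  rw [integral_congr_ae this, integral_const_mul, integral_re hint, hI]
  simp

theorem watson_one_eq_parseval :
    (1 / (4 * π^4)) *
      (∫ p1 in (0:ℝ)..π, ∫ p2 in (0:ℝ)..π, ∫ p3 in (0:ℝ)..π, ∫ p4 in (0:ℝ)..π,
        1 / (1 - (1/4) * (cos p1 + cos p2 + cos p3 + cos p4)))
    = (2 / π^3) * ∫ x in Ioi (0:ℝ), (Kp x * Km x).re / (1 + x^2) := by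
  rw [lhs_eq, div_mul_eq_mul_div 2, rhs_eq]
  have := pi_pos.ne'
  field_simp
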